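/- For any λ > 0 and any m₁ ≥ 0, the jump matrix B = I_{m₁+1} ⊗ (λB̃) satisfies ‖B‖₂ ≤ λ·√(L_y·‖f‖_∞); in particular its logarithmic ℓ2-norm satisfies μ₂[B] ≤ λ·√(L_y·‖f‖_∞). -/

import Mathlib

open MeasureTheory Matrix

/-- The Euclidean (ℓ2) norm of a vector. -/
noncomputable def l2norm {n : Type*} [Fintype n] (v : n → ℝ) : ℝ :=
  Real.sqrt (∑ i, (v i)^2)

/-- F_{0,j,ℓ} = ∫_{y_ℓ}^{y_{ℓ+1}} f(ξ − y_j) dξ. -/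
noncomputable def F0 (y : ℕ → ℝ) (f : ℝ → ℝ) (j ℓ : ℕ) : ℝ :=
  ∫ ξ in (y ℓ)..(y (ℓ+1)), f (ξ - y j)

/-- F_{1,j,ℓ} = ∫_{y_ℓ}^{y_{ℓ+1}} ξ f(ξ − y_j) dξ. -/
noncomputable def F1 (y : ℕ → ℝ) (f : ℝ → ℝ) (j ℓ : ℕ) : ℝ :=
  ∫ ξ in (y ℓ)..(y (ℓ+1)), ξ * f (ξ - y j)

/-- The (m₂+1)×(m₂+1) jump quadrature matrix B̃. -/
noncomputable def Btilde (m₂ : ℕ) (y : ℕ → ℝ) (Δy : ℝ) (f : ℝ → ℝ) :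
    Matrix (Fin (m₂+1)) (Fin (m₂+1)) ℝ :=
  Matrix.of fun j ℓ =>
    if ℓ.val = 0 then
      (y 1 * F0 y f j.val 0 - F1 y f j.val 0) / Δy
    else if ℓ.val = m₂ then
      (F1 y f j.val (m₂-1) - y (m₂-1) * F0 y f j.val (m₂-1)) / Δy
    else
      (F1 y f j.val (ℓ.val-1) - y (ℓ.val-1) * F0 y f j.val (ℓ.val-1)) / Δy
        + (y (ℓ.val+1) * F0 y f j.val ℓ.val - F1 y f j.val ℓ.val) / Δy

/-!
The weights of `Btilde` are those of the trapezoidal product rule, so on a uniform mesh its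
`(j, ℓ)` entry is `∫ φ_ℓ(ξ) f(ξ - y_j) dξ` over `[y_0, y_{m₂}]`, where `φ_ℓ` is the piecewise
linear hat function at the node `y_ℓ`. The hat functions sum to at most one, which bounds the
absolute row sums by `∫ |f|`; each has integral at most `Δy`, which bounds every entry by
`Δy ‖f‖_∞` and hence the absolute column sums by `(m₂ + 1) Δy ‖f‖_∞`. Schur's test turns the two
bounds into one for the spectral norm.
-/

open scoped Kronecker

section EuclideanNorm

variable {m n : Type*} [Fintype n]

lemma l2norm_nonneg (v : n → ℝ) : 0 ≤ l2norm v :=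
  Real.sqrt_nonneg _

lemma l2norm_sq (v : n → ℝ) : l2norm v ^ 2 = ∑ i, v i ^ 2 :=
  Real.sq_sqrt (Finset.sum_nonneg fun i _ => sq_nonneg (v i))

lemma dotProduct_self_eq_l2norm_sq (v : n → ℝ) : v ⬝ᵥ v = l2norm v ^ 2 := by
  simp only [l2norm_sq, dotProduct, ← sq]

lemma l2norm_smul (c : ℝ) (v : n → ℝ) : l2norm (c • v) = |c| * l2norm v := by
  simp only [l2norm, Pi.smul_apply, smul_eq_mul, mul_pow, ← Finset.mul_sum,
    Real.sqrt_mul (sq_nonneg c), Real.sqrt_sq_eq_abs]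

lemma dotProduct_le_l2norm_mul_l2norm (v w : n → ℝ) : v ⬝ᵥ w ≤ l2norm v * l2norm w :=
  Real.sum_mul_le_sqrt_mul_sqrt _ v w

lemma mulVec_dotProduct_le_of_l2norm_mulVec_le {A : Matrix n n ℝ} {c : ℝ}
    (hA : ∀ v, l2norm (A *ᵥ v) ≤ c * l2norm v) (v : n → ℝ) :
    (A *ᵥ v) ⬝ᵥ v ≤ c * (v ⬝ᵥ v) :=
  calc (A *ᵥ v) ⬝ᵥ v
      ≤ l2norm (A *ᵥ v) * l2norm v := dotProduct_le_l2norm_mul_l2norm _ _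
    _ ≤ c * l2norm v * l2norm v := mul_le_mul_of_nonneg_right (hA v) (l2norm_nonneg v)
    _ = c * (v ⬝ᵥ v) := by rw [dotProduct_self_eq_l2norm_sq, sq, mul_assoc]

lemma sq_mulVec_le_sum_abs_mul_sum (A : Matrix m n ℝ) (v : n → ℝ) (i : m) :
    (A *ᵥ v) i ^ 2 ≤ (∑ j, |A i j|) * ∑ j, |A i j| * v j ^ 2 := by
  refine Finset.sum_sq_le_sum_mul_sum_of_sq_le_mul _ (fun j _ => abs_nonneg _)
    (fun j _ => by positivity) fun j _ => le_of_eq ?_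
  rw [mul_pow, ← mul_assoc, ← sq, sq_abs]

theorem l2norm_mulVec_le_of_sum_abs_le [Fintype m] {A : Matrix m n ℝ} {R C : ℝ} (hR : 0 ≤ R)
    (hrow : ∀ i, ∑ j, |A i j| ≤ R) (hcol : ∀ j, ∑ i, |A i j| ≤ C) (v : n → ℝ) :
    l2norm (A *ᵥ v) ≤ √(R * C) * l2norm v := by
  have hsq : ∑ i, (A *ᵥ v) i ^ 2 ≤ R * C * ∑ j, v j ^ 2 :=
    calc ∑ i, (A *ᵥ v) i ^ 2
        ≤ ∑ i, R * ∑ j, |A i j| * v j ^ 2 := by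
          gcongr with i
          exact (sq_mulVec_le_sum_abs_mul_sum A v i).trans (by gcongr; exact hrow i)
      _ = R * ∑ j, (∑ i, |A i j|) * v j ^ 2 := by
          rw [← Finset.mul_sum, Finset.sum_comm]
          simp only [Finset.sum_mul]
      _ ≤ R * ∑ j, C * v j ^ 2 := by
          gcongr with j
          exact hcol j
      _ = R * C * ∑ j, v j ^ 2 := by rw [← Finset.mul_sum, mul_assoc]
  calc l2norm (A *ᵥ v)
      ≤ √(R * C * ∑ j, v j ^ 2) := Real.sqrt_le_sqrt hsq
    _ = √(R * C) * l2norm v := Real.sqrt_mul' _ (Finset.sum_nonneg fun j _ => sq_nonneg (v j))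

lemma one_kronecker_mulVec_apply {ι : Type*} [Fintype ι] [DecidableEq ι] (A : Matrix m n ℝ)
    (v : ι × n → ℝ) (p : ι × m) :
    (((1 : Matrix ι ι ℝ) ⊗ₖ A) *ᵥ v) p = (A *ᵥ fun k => v (p.1, k)) p.2 := by
  simp only [mulVec, dotProduct, kroneckerMap_apply, one_apply, Fintype.sum_prod_type, ite_mul,
    one_mul, zero_mul]
  rw [Finset.sum_comm]
  simp only [Finset.sum_ite_eq, Finset.mem_univ, if_true]

theorem l2norm_one_kronecker_mulVec_le [Fintype m] {ι : Type*} [Fintype ι] [DecidableEq ι]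
    {A : Matrix m n ℝ} {c : ℝ} (hc : 0 ≤ c) (hA : ∀ v, l2norm (A *ᵥ v) ≤ c * l2norm v)
    (v : ι × n → ℝ) :
    l2norm (((1 : Matrix ι ι ℝ) ⊗ₖ A) *ᵥ v) ≤ c * l2norm v := by
  refine le_of_pow_le_pow_left₀ two_ne_zero (mul_nonneg hc (l2norm_nonneg v)) ?_
  calc l2norm (((1 : Matrix ι ι ℝ) ⊗ₖ A) *ᵥ v) ^ 2
      = ∑ i, l2norm (A *ᵥ fun k => v (i, k)) ^ 2 := by
        simp only [l2norm_sq, Fintype.sum_prod_type, one_kronecker_mulVec_apply]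
    _ ≤ ∑ i, (c * l2norm fun k => v (i, k)) ^ 2 := by
        gcongr with i
        · exact l2norm_nonneg _
        · exact hA _
    _ = (c * l2norm v) ^ 2 := by
        simp only [mul_pow, l2norm_sq, Fintype.sum_prod_type, ← Finset.mul_sum]

end EuclideanNorm

section HatFunction

/-- The clamp of a real number to `[0, 1]`, whose unit increments are the hat function. -/
noncomputable def unitRamp (t : ℝ) : ℝ :=
  max 0 (min 1 t)

/-- The hat function `max 0 (1 - |t|)`. It is encoded as an increment of `unitRamp` so that sums
over integer translates and integrals telescope. -/
noncomputable def hat (t : ℝ) : ℝ :=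
  unitRamp (t + 1) - unitRamp t

lemma unitRamp_nonneg (t : ℝ) : 0 ≤ unitRamp t :=
  le_max_left _ _

lemma unitRamp_le_one (t : ℝ) : unitRamp t ≤ 1 :=
  max_le zero_le_one (min_le_left _ _)

lemma monotone_unitRamp : Monotone unitRamp := fun _ _ hst =>
  max_le_max le_rfl (min_le_min le_rfl hst)

lemma continuous_unitRamp : Continuous unitRamp :=
  continuous_const.max (continuous_const.min continuous_id)

lemma unitRamp_of_nonpos {t : ℝ} (ht : t ≤ 0) : unitRamp t = 0 :=
  max_eq_left ((min_le_right _ _).trans ht)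

lemma unitRamp_of_one_le {t : ℝ} (ht : 1 ≤ t) : unitRamp t = 1 := by
  rw [unitRamp, min_eq_left ht, max_eq_right zero_le_one]

lemma unitRamp_of_mem_Icc {t : ℝ} (ht : t ∈ Set.Icc 0 1) : unitRamp t = t := by
  rw [unitRamp, min_eq_right ht.2, max_eq_right ht.1]

lemma unitRamp_one_sub (t : ℝ) : unitRamp (1 - t) = 1 - unitRamp t := by
  simp only [unitRamp]
  grind

lemma hat_nonneg (t : ℝ) : 0 ≤ hat t :=
  sub_nonneg.2 (monotone_unitRamp (by linarith))

@[fun_prop]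
lemma continuous_hat : Continuous hat :=
  (continuous_unitRamp.comp (continuous_add_const 1)).sub continuous_unitRamp

lemma hat_neg (t : ℝ) : hat (-t) = hat t := by
  have hpos := unitRamp_one_sub t
  have hneg := unitRamp_one_sub (-t)
  rw [sub_neg_eq_add, add_comm] at hneg
  rw [hat, hat, neg_add_eq_sub, hpos, hneg]
  ring

lemma hat_of_mem_Icc_zero_one {t : ℝ} (ht : t ∈ Set.Icc 0 1) : hat t = 1 - t := by
  rw [hat, unitRamp_of_one_le (by linarith [ht.1]), unitRamp_of_mem_Icc ht]

lemma hat_of_one_le {t : ℝ} (ht : 1 ≤ t) : hat t = 0 := by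
  rw [hat, unitRamp_of_one_le (by linarith), unitRamp_of_one_le ht, sub_self]

lemma sum_range_hat_sub_le_one (t : ℝ) (n : ℕ) : ∑ k ∈ Finset.range n, hat (t - k) ≤ 1 := by
  have htelescope : ∑ k ∈ Finset.range n, hat (t - k)
      = unitRamp (t + 1) - unitRamp (t + 1 - n) := by
    have hsum := Finset.sum_range_sub' (fun k : ℕ => unitRamp (t + 1 - k)) n
    rw [Nat.cast_zero, sub_zero] at hsum
    rw [← hsum]
    refine Finset.sum_congr rfl fun k _ => ?_
    rw [hat, Nat.cast_succ]
    congr 2 <;> ring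
  linarith [unitRamp_le_one (t + 1), unitRamp_nonneg (t + 1 - n)]

lemma integral_hat_le_one (a b : ℝ) : ∫ t in a..b, hat t ≤ 1 := by
  have hint (c d : ℝ) : IntervalIntegrable unitRamp volume c d :=
    continuous_unitRamp.intervalIntegrable c d
  have htelescope : ∫ t in a..b, hat t
      = (∫ t in b..b + 1, unitRamp t) - ∫ t in a..a + 1, unitRamp t := by
    have hint_add : IntervalIntegrable (fun t => unitRamp (t + 1)) volume a b :=
      (continuous_unitRamp.comp (continuous_add_const 1)).intervalIntegrable a b
    simp only [hat]
    rw [intervalIntegral.integral_sub hint_add (hint a b),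
      intervalIntegral.integral_comp_add_right,
      intervalIntegral.integral_interval_sub_interval_comm' (hint _ _) (hint _ _) (hint _ _)]
  have hupper : ∫ t in b..b + 1, unitRamp t ≤ ∫ _ in b..b + 1, (1 : ℝ) :=
    intervalIntegral.integral_mono_on (by linarith) (hint _ _) intervalIntegrable_const
      fun t _ => unitRamp_le_one t
  have hlower : 0 ≤ ∫ t in a..a + 1, unitRamp t :=
    intervalIntegral.integral_nonneg (by linarith) fun t _ => unitRamp_nonneg t
  rw [integral_one, add_sub_cancel_left] at hupper
  linarith

variable {g : ℝ → ℝ} {a b h : ℝ}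

lemma integral_hat_comp_le (hh : 0 < h) (a b c : ℝ) : ∫ ξ in a..b, hat ((ξ - c) / h) ≤ h := by
  simp only [sub_div]
  rw [intervalIntegral.integral_comp_div_sub _ hh.ne', smul_eq_mul]
  exact mul_le_of_le_one_right hh.le (integral_hat_le_one _ _)

lemma intervalIntegrable_hat_comp_mul (hg : IntervalIntegrable g volume a b) (c h : ℝ) :
    IntervalIntegrable (fun ξ => hat ((ξ - c) / h) * g ξ) volume a b :=
  hg.continuousOn_mul (by fun_prop)

lemma integral_sub_div_mul (hg : IntervalIntegrable g volume a b) (c h : ℝ) :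
    ∫ ξ in a..b, (c - ξ) / h * g ξ
      = (c * (∫ ξ in a..b, g ξ) - ∫ ξ in a..b, ξ * g ξ) / h := by
  have hid : IntervalIntegrable (fun ξ => ξ * g ξ) volume a b :=
    hg.continuousOn_mul continuousOn_id
  rw [← intervalIntegral.integral_const_mul, ← intervalIntegral.integral_sub (hg.const_mul c) hid,
    ← intervalIntegral.integral_div]
  congr 1 with ξ
  ring

lemma integral_hat_mul_right (hh : 0 < h) (hab : a + h ≤ b)
    (hg : IntervalIntegrable g volume a b) :
    ∫ ξ in a..b, hat ((ξ - a) / h) * g ξ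
      = ((a + h) * (∫ ξ in a..a + h, g ξ) - ∫ ξ in a..a + h, ξ * g ξ) / h := by
  have hmem : a + h ∈ Set.uIcc a b := Set.mem_uIcc_of_le (by linarith) hab
  have hg₁ := hg.mono_set (Set.uIcc_subset_uIcc_left hmem)
  have hg₂ := hg.mono_set (Set.uIcc_subset_uIcc_right hmem)
  have hsupport : ∫ ξ in a..a + h, hat ((ξ - a) / h) * g ξ
      = ∫ ξ in a..a + h, (a + h - ξ) / h * g ξ := by
    refine intervalIntegral.integral_congr fun ξ hξ => ?_
    rw [Set.uIcc_of_le (by linarith)] at hξ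
    have ht : (ξ - a) / h ∈ Set.Icc 0 1 :=
      ⟨div_nonneg (by linarith [hξ.1]) hh.le, (div_le_one hh).2 (by linarith [hξ.2])⟩
    simp only [hat_of_mem_Icc_zero_one ht]
    field_simp
    ring
  have hvanish : ∫ ξ in a + h..b, hat ((ξ - a) / h) * g ξ = 0 := by
    refine intervalIntegral.integral_zero_ae (.of_forall fun ξ hξ => ?_)
    rw [Set.uIoc_of_le hab] at hξ
    rw [hat_of_one_le ((one_le_div hh).2 (by linarith [hξ.1])), zero_mul]
  rw [← intervalIntegral.integral_add_adjacent_intervals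
      (intervalIntegrable_hat_comp_mul hg₁ a h) (intervalIntegrable_hat_comp_mul hg₂ a h),
    hsupport, hvanish, add_zero, integral_sub_div_mul hg₁]

lemma integral_hat_mul_left (hh : 0 < h) (hab : a + h ≤ b)
    (hg : IntervalIntegrable g volume a b) :
    ∫ ξ in a..b, hat ((ξ - b) / h) * g ξ
      = ((∫ ξ in b - h..b, ξ * g ξ) - (b - h) * ∫ ξ in b - h..b, g ξ) / h := by
  have hg_neg : IntervalIntegrable (fun ξ => g (-ξ)) volume (-b) (-a) :=
    ((IntervalIntegrable.iff_comp_neg (by simp)).1 hg).symm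
  have hid_neg := intervalIntegral.integral_comp_neg (fun ξ => ξ * g ξ) (a := -b) (b := -b + h)
  calc ∫ ξ in a..b, hat ((ξ - b) / h) * g ξ
      = ∫ ξ in -b..-a, hat ((ξ - -b) / h) * g (-ξ) := by
        rw [← neg_neg a, ← neg_neg b, ← intervalIntegral.integral_comp_neg]
        simp only [neg_neg]
        refine intervalIntegral.integral_congr fun ξ _ => ?_
        simp only [← hat_neg ((ξ - -b) / h)]
        ring_nf
    _ = ((-b + h) * (∫ ξ in -b..-b + h, g (-ξ)) - ∫ ξ in -b..-b + h, ξ * g (-ξ)) / h :=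
        integral_hat_mul_right hh (by linarith) hg_neg
    _ = ((∫ ξ in b - h..b, ξ * g ξ) - (b - h) * ∫ ξ in b - h..b, g ξ) / h := by
        simp only [neg_mul, intervalIntegral.integral_neg] at hid_neg
        rw [intervalIntegral.integral_comp_neg, neg_eq_iff_eq_neg.1 hid_neg, neg_neg,
          neg_add, neg_neg, ← sub_eq_add_neg]
        ring

end HatFunction

section JumpMatrix

variable {f : ℝ → ℝ} {m₂ : ℕ} {y : ℕ → ℝ} {y₀ h S : ℝ}

lemma intervalIntegrable_comp_sub_of_locallyIntegrable (hf : LocallyIntegrable f) (a b c : ℝ) :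
    IntervalIntegrable (fun ξ => f (ξ - c)) volume a b := by
  have hint : IntervalIntegrable f volume (a - c) (b - c) :=
    (hf.integrableOn_isCompact isCompact_uIcc).intervalIntegrable
  simpa only [sub_add_cancel] using hint.comp_sub_right c

lemma monotone_of_eq_add_mul (hh : 0 ≤ h) (hy : ∀ k : ℕ, y k = y₀ + k * h) : Monotone y := by
  intro k l hkl
  rw [hy, hy]
  gcongr

theorem Btilde_apply_eq_integral_hat (hf : LocallyIntegrable f) (hm₂ : 1 ≤ m₂) (hh : 0 < h)
    (hy : ∀ k : ℕ, y k = y₀ + k * h) (j ℓ : Fin (m₂ + 1)) :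
    Btilde m₂ y h f j ℓ = ∫ ξ in y 0..y m₂, hat ((ξ - y ℓ) / h) * f (ξ - y j) := by
  have hmono : Monotone y := monotone_of_eq_add_mul hh.le hy
  have hsucc (k : ℕ) : y k + h = y (k + 1) := by rw [hy, hy]; push_cast; ring
  have hint (k l : ℕ) : IntervalIntegrable (fun ξ => f (ξ - y j)) volume (y k) (y l) :=
    intervalIntegrable_comp_sub_of_locallyIntegrable hf _ _ _
  have hright {k : ℕ} (hk : k < m₂) : ∫ ξ in y k..y m₂, hat ((ξ - y k) / h) * f (ξ - y j)
      = (y (k + 1) * F0 y f j k - F1 y f j k) / h := by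
    rw [integral_hat_mul_right hh ((hsucc k).trans_le (hmono hk)) (hint k m₂), hsucc, F0, F1]
  have hleft (k : ℕ) : ∫ ξ in y 0..y (k + 1), hat ((ξ - y (k + 1)) / h) * f (ξ - y j)
      = (F1 y f j k - y k * F0 y f j k) / h := by
    have hle : y 0 + h ≤ y (k + 1) := (hsucc 0).trans_le (hmono (by omega))
    rw [integral_hat_mul_left hh hle (hint 0 (k + 1)), ← hsucc k, add_sub_cancel_right, hsucc,
      F0, F1]
  obtain ⟨_ | k, hk⟩ := ℓ
  · simp only [Btilde, of_apply, if_true, hright hm₂, zero_add]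
  obtain hlast | hlt := (Nat.lt_succ_iff.1 hk).eq_or_lt
  · subst hlast
    simp only [Btilde, of_apply, k.succ_ne_zero, if_false, if_true, hleft, Nat.add_sub_cancel]
  · simp only [Btilde, of_apply, k.succ_ne_zero, hlt.ne, if_false, Nat.add_sub_cancel]
    rw [← hleft, ← hright hlt, intervalIntegral.integral_add_adjacent_intervals]
    · exact intervalIntegrable_hat_comp_mul (hint _ _) _ _
    · exact intervalIntegrable_hat_comp_mul (hint _ _) _ _

lemma abs_Btilde_apply_le_integral_hat (hf : LocallyIntegrable f) (hm₂ : 1 ≤ m₂) (hh : 0 < h)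
    (hy : ∀ k : ℕ, y k = y₀ + k * h) (j ℓ : Fin (m₂ + 1)) :
    |Btilde m₂ y h f j ℓ| ≤ ∫ ξ in y 0..y m₂, hat ((ξ - y ℓ) / h) * |f (ξ - y j)| := by
  rw [Btilde_apply_eq_integral_hat hf hm₂ hh hy]
  refine (intervalIntegral.abs_integral_le_integral_abs
    (monotone_of_eq_add_mul hh.le hy m₂.zero_le)).trans_eq ?_
  simp only [abs_mul, abs_of_nonneg (hat_nonneg _)]

lemma sum_hat_mesh_le_one (hh : 0 < h) (hy : ∀ k : ℕ, y k = y₀ + k * h) (n : ℕ) (ξ : ℝ) :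
    ∑ ℓ : Fin n, hat ((ξ - y ℓ) / h) ≤ 1 := by
  refine le_of_eq_of_le ?_ (sum_range_hat_sub_le_one ((ξ - y₀) / h) n)
  rw [← Fin.sum_univ_eq_sum_range]
  refine Finset.sum_congr rfl fun ℓ _ => ?_
  rw [hy, ← sub_sub, sub_div, mul_div_cancel_right₀ _ hh.ne']

theorem sum_abs_Btilde_row_le (hf : Integrable f) (hm₂ : 1 ≤ m₂) (hh : 0 < h)
    (hy : ∀ k : ℕ, y k = y₀ + k * h) (j : Fin (m₂ + 1)) :
    ∑ ℓ, |Btilde m₂ y h f j ℓ| ≤ ∫ ξ, |f ξ| := by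
  have hle : y 0 ≤ y m₂ := monotone_of_eq_add_mul hh.le hy m₂.zero_le
  have hshift : Integrable (fun ξ => |f (ξ - y j)|) := (hf.comp_sub_right (y j)).abs
  have hint : IntervalIntegrable (fun ξ => |f (ξ - y j)|) volume (y 0) (y m₂) :=
    hshift.intervalIntegrable
  have hint_hat (ℓ : Fin (m₂ + 1)) := intervalIntegrable_hat_comp_mul hint (y ℓ) h
  have hint_sum : IntervalIntegrable
      (fun ξ => ∑ ℓ : Fin (m₂ + 1), hat ((ξ - y ℓ) / h) * |f (ξ - y j)|) volume (y 0) (y m₂) := by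
    simpa only [Finset.sum_fn] using IntervalIntegrable.sum _ fun ℓ _ => hint_hat ℓ
  calc ∑ ℓ, |Btilde m₂ y h f j ℓ|
      ≤ ∑ ℓ : Fin (m₂ + 1), ∫ ξ in y 0..y m₂, hat ((ξ - y ℓ) / h) * |f (ξ - y j)| := by
        gcongr with ℓ
        exact abs_Btilde_apply_le_integral_hat hf.locallyIntegrable hm₂ hh hy j ℓ
    _ = ∫ ξ in y 0..y m₂, ∑ ℓ : Fin (m₂ + 1), hat ((ξ - y ℓ) / h) * |f (ξ - y j)| :=
        (intervalIntegral.integral_finsetSum fun ℓ _ => hint_hat ℓ).symm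
    _ ≤ ∫ ξ in y 0..y m₂, |f (ξ - y j)| := by
        refine intervalIntegral.integral_mono_on hle hint_sum hint fun ξ _ => ?_
        rw [← Finset.sum_mul]
        exact mul_le_of_le_one_left (abs_nonneg _) (sum_hat_mesh_le_one hh hy _ ξ)
    _ ≤ ∫ ξ, |f (ξ - y j)| := by
        rw [intervalIntegral.integral_of_le hle]
        exact setIntegral_le_integral hshift (.of_forall fun ξ => abs_nonneg _)
    _ = ∫ ξ, |f ξ| := integral_sub_right_eq_self (fun ξ => |f ξ|) (y j)

lemma nonneg_of_ae_abs_le {α : Type*} [MeasurableSpace α] {μ : Measure α} [NeZero μ] {g : α → ℝ}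
    (hS : ∀ᵐ x ∂μ, |g x| ≤ S) : 0 ≤ S :=
  let ⟨x, hx⟩ := hS.exists
  (abs_nonneg (g x)).trans hx

lemma abs_Btilde_apply_le (hf : LocallyIntegrable f) (hS : ∀ᵐ ξ, |f ξ| ≤ S) (hm₂ : 1 ≤ m₂)
    (hh : 0 < h) (hy : ∀ k : ℕ, y k = y₀ + k * h) (j ℓ : Fin (m₂ + 1)) :
    |Btilde m₂ y h f j ℓ| ≤ h * S := by
  have hint := (intervalIntegrable_comp_sub_of_locallyIntegrable hf (y 0) (y m₂) (y j)).abs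
  have hS_shift : ∀ᵐ ξ, |f (ξ - y j)| ≤ S :=
    (measurePreserving_sub_right volume (y j)).quasiMeasurePreserving.ae hS
  calc |Btilde m₂ y h f j ℓ|
      ≤ ∫ ξ in y 0..y m₂, hat ((ξ - y ℓ) / h) * |f (ξ - y j)| :=
        abs_Btilde_apply_le_integral_hat hf hm₂ hh hy j ℓ
    _ ≤ ∫ ξ in y 0..y m₂, hat ((ξ - y ℓ) / h) * S := by
        refine intervalIntegral.integral_mono_ae (monotone_of_eq_add_mul hh.le hy m₂.zero_le)
          (intervalIntegrable_hat_comp_mul hint _ _)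
          (intervalIntegrable_hat_comp_mul intervalIntegrable_const _ _) ?_
        filter_upwards [hS_shift] with ξ hξ
        exact mul_le_mul_of_nonneg_left hξ (hat_nonneg _)
    _ = (∫ ξ in y 0..y m₂, hat ((ξ - y ℓ) / h)) * S := intervalIntegral.integral_mul_const _ _
    _ ≤ h * S :=
        mul_le_mul_of_nonneg_right (integral_hat_comp_le hh _ _ _) (nonneg_of_ae_abs_le hS)

theorem sum_abs_Btilde_col_le (hf : LocallyIntegrable f) (hS : ∀ᵐ ξ, |f ξ| ≤ S) (hm₂ : 1 ≤ m₂)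
    (hh : 0 < h) (hy : ∀ k : ℕ, y k = y₀ + k * h) (ℓ : Fin (m₂ + 1)) :
    ∑ j, |Btilde m₂ y h f j ℓ| ≤ (m₂ + 1) * h * S := by
  refine (Finset.sum_le_card_nsmul _ _ _ fun j _ =>
    abs_Btilde_apply_le hf hS hm₂ hh hy j ℓ).trans_eq ?_
  rw [Finset.card_univ, Fintype.card_fin, nsmul_eq_mul, Nat.cast_succ, mul_assoc]

theorem l2norm_Btilde_mulVec_le (hf : Integrable f) (hS : ∀ᵐ ξ, |f ξ| ≤ S) (hm₂ : 1 ≤ m₂)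
    (hh : 0 < h) (hy : ∀ k : ℕ, y k = y₀ + k * h) (v : Fin (m₂ + 1) → ℝ) :
    l2norm (Btilde m₂ y h f *ᵥ v) ≤ √((m₂ + 1) * h * S * ∫ ξ, |f ξ|) * l2norm v := by
  rw [mul_comm _ (∫ ξ, |f ξ|)]
  exact l2norm_mulVec_le_of_sum_abs_le (integral_nonneg fun ξ => abs_nonneg (f ξ))
    (sum_abs_Btilde_row_le hf hm₂ hh hy)
    (sum_abs_Btilde_col_le hf.locallyIntegrable hS hm₂ hh hy) v

theorem jump_matrix_l2_bound_general {ι : Type*} [Fintype ι] [DecidableEq ι]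
    (hf : Integrable f) (hS : ∀ᵐ ξ, |f ξ| ≤ S) (hm₂ : 1 ≤ m₂) (hh : 0 < h)
    (hy : ∀ k : ℕ, y k = y₀ + k * h) (lam : ℝ) :
    let L : ℝ := (m₂ + 2) * h
    let B : Matrix (ι × Fin (m₂ + 1)) (ι × Fin (m₂ + 1)) ℝ :=
      (1 : Matrix ι ι ℝ) ⊗ₖ (lam • Btilde m₂ y h f)
    (∀ V, l2norm (B *ᵥ V) ≤ |lam| * √(L * S * ∫ ξ, |f ξ|) * l2norm V) ∧
      ∀ V, (B *ᵥ V) ⬝ᵥ V ≤ |lam| * √(L * S * ∫ ξ, |f ξ|) * (V ⬝ᵥ V) := by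
  intro L B
  have hS₀ : 0 ≤ S := nonneg_of_ae_abs_le hS
  have hblock (v : Fin (m₂ + 1) → ℝ) : l2norm ((lam • Btilde m₂ y h f) *ᵥ v)
      ≤ |lam| * √(L * S * ∫ ξ, |f ξ|) * l2norm v := by
    rw [smul_mulVec, l2norm_smul, mul_assoc]
    gcongr
    refine (l2norm_Btilde_mulVec_le hf hS hm₂ hh hy v).trans ?_
    gcongr
    · exact l2norm_nonneg v
    · simp only [L]
      gcongr
      norm_num
  have hB : ∀ V, l2norm (B *ᵥ V) ≤ |lam| * √(L * S * ∫ ξ, |f ξ|) * l2norm V :=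
    l2norm_one_kronecker_mulVec_le (by positivity) hblock
  exact ⟨hB, mulVec_dotProduct_le_of_l2norm_mulVec_le hB⟩

end JumpMatrix

/-- For any λ > 0 and any m₁ ≥ 0, the jump matrix B = I_{m₁+1} ⊗ (λB̃)
satisfies ‖B‖₂ ≤ λ√(L_y‖f‖_∞); in particular μ₂[B] ≤ λ√(L_y‖f‖_∞), where
L_y = (m₂+2)Δy and ‖f‖_∞ = sup_ξ f(ξ). -/
theorem jump_matrix_l2_bound
    (f : ℝ → ℝ) (hf0 : ∀ ξ : ℝ, 0 ≤ f ξ) (hfi : Integrable f)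
    (hfb : BddAbove (Set.range f)) (hf1 : (∫ ξ : ℝ, f ξ) = 1)
    (m₂ : ℕ) (hm₂ : 1 ≤ m₂) (y₀ Δy : ℝ) (hΔy : 0 < Δy)
    (m₁ : ℕ) (lam : ℝ) (hlam : 0 < lam) :
    let y : ℕ → ℝ := fun k => y₀ + k * Δy
    let Ly : ℝ := (m₂ + 2) * Δy
    let fsup : ℝ := ⨆ ξ : ℝ, f ξ
    let B : Matrix (Fin (m₁+1) × Fin (m₂+1)) (Fin (m₁+1) × Fin (m₂+1)) ℝ :=
      Matrix.kroneckerMap (· * ·)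
        (1 : Matrix (Fin (m₁+1)) (Fin (m₁+1)) ℝ) (lam • Btilde m₂ y Δy f)
    (∀ V : Fin (m₁+1) × Fin (m₂+1) → ℝ,
      l2norm (B.mulVec V) ≤ lam * Real.sqrt (Ly * fsup) * l2norm V) ∧
    (∀ V : Fin (m₁+1) × Fin (m₂+1) → ℝ,
      (B.mulVec V) ⬝ᵥ V ≤ lam * Real.sqrt (Ly * fsup) * (V ⬝ᵥ V)) := by
  have hS : ∀ᵐ ξ, |f ξ| ≤ ⨆ ξ, f ξ := .of_forall fun ξ =>
    (abs_of_nonneg (hf0 ξ)).trans_le (le_ciSup hfb ξ)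
  simpa only [abs_of_nonneg (hf0 _), hf1, mul_one, abs_of_pos hlam] using
    jump_matrix_l2_bound_general (ι := Fin (m₁ + 1)) hfi hS hm₂ hΔy (fun _ => rfl) lam
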